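/- Let p be an odd prime for which 2 is a semiprimitive root modulo p, i.e., 2 has multiplicative order (p−1)/2 modulo p and the congruence 2^x ≡ −1 (mod p) has no solution. Let a ∈ {0,1,…,p−1} and j ∈ {0,1}. Then for every ε > 0 one has T^{(j)}_{p,a}(x) = x/(2p) + O(x^{α+ε}) as x → ∞, where α = ln p / ((p−1)·ln 2). (Upper-bound half of Theorem 3.) -/

import Mathlib

/-!
Writing the parity of `s n` as `(-1) ^ s n` and the residue class of `n` through the additive
characters of `ZMod p`, `T p a j x - x / (2 p)` becomes, up to `O(1)`, an average of the sums
`S z x = ∑_{n < x} (-1) ^ s n * z ^ n` over `z ^ p = 1`.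

Splitting off the last binary digit gives `S z (2 N) = (1 - z) * S (z ^ 2) N`. Let `d = (p - 1) / 2`
be the order of `2`, so that `z ^ 2 ^ d = z`; then
`‖S z N‖ ≤ ∏_{i < d} ‖1 - z ^ 2 ^ i‖ * ‖S z (N / 2 ^ d)‖ + 2 ^ d`.
The product vanishes for `z = 1`. Because `-1` is not a power of `2`, the residues `± 2 ^ i` are all
the nonzero ones, and the two signs contribute complex conjugate factors; hence for `z ≠ 1` the
square of the product is `∏_{0 < k < p} ‖1 - z ^ k‖ = p`. Iterating this recursion gives
`S z N = O(N ^ α)` with `(2 ^ d) ^ α = √p`.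
-/

/-- `s n` is the number of 1's in the binary expansion of `n`. -/
def s (n : ℕ) : ℕ := (Nat.digits 2 n).sum

/-- `T m a j x` counts natural numbers `n < x` with `n ≡ a (mod m)` and `s n ≡ j (mod 2)`. -/
def T (m a j x : ℕ) : ℕ :=
  ((Finset.range x).filter (fun n => n % m = a ∧ s n % 2 = j)).card

open Finset Filter Asymptotics

lemma s_two_mul (n : ℕ) : s (2 * n) = s n := by
  rcases n.eq_zero_or_pos with rfl | hn
  · rfl
  · simp [s, Nat.digits_base_mul one_lt_two hn]

lemma s_two_mul_add_one (n : ℕ) : s (2 * n + 1) = s n + 1 := by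
  have h : Nat.digits 2 (1 + 2 * n) = 1 :: Nat.digits 2 n :=
    Nat.digits_add 2 one_lt_two 1 n one_lt_two (Or.inl one_ne_zero)
  rw [s, add_comm, h, List.sum_cons, add_comm, s]

/-- The exponential sum of the Thue–Morse sequence `(-1) ^ s n`. The parameter `z` stands for
`exp (2 π i θ)`, and is an element of a ring so that the recursion in `z` is purely algebraic. -/
noncomputable def thueMorseSum {R : Type*} [CommRing R] (z : R) (N : ℕ) : R :=
  ∑ n ∈ range N, (-1) ^ s n * z ^ n

section CommRing

variable {R : Type*} [CommRing R]

lemma thueMorseSum_two_mul (z : R) (N : ℕ) :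
    thueMorseSum z (2 * N) = (1 - z) * thueMorseSum (z ^ 2) N := by
  simp only [thueMorseSum]
  induction N with
  | zero => simp
  | succ N ih =>
    rw [Nat.mul_succ, sum_range_succ, sum_range_succ, ih, sum_range_succ, s_two_mul,
      s_two_mul_add_one]
    ring

lemma thueMorseSum_two_pow_mul (z : R) (k N : ℕ) :
    thueMorseSum z (2 ^ k * N)
      = (∏ i ∈ range k, (1 - z ^ 2 ^ i)) * thueMorseSum (z ^ 2 ^ k) N := by
  induction k generalizing N with
  | zero => simp
  | succ k ih =>
    rw [pow_succ, mul_assoc, ih, thueMorseSum_two_mul, prod_range_succ, mul_assoc, ← pow_mul]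

end CommRing

section SeminormedCommRing

variable {R : Type*} [SeminormedCommRing R] [NormOneClass R]

lemma norm_thueMorseSum_le_add_sub {z : R} (hz : ‖z‖ ≤ 1) {M N : ℕ} (hMN : M ≤ N) :
    ‖thueMorseSum z N‖ ≤ ‖thueMorseSum z M‖ + (N - M : ℕ) := by
  have hterm (n : ℕ) : ‖(-1) ^ s n * z ^ n‖ ≤ 1 := by
    rcases neg_one_pow_eq_or R (s n) with h | h <;>
      simpa [h] using (norm_pow_le z n).trans (pow_le_one₀ (norm_nonneg z) hz)
  rw [thueMorseSum, ← sum_range_add_sum_Ico _ hMN]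
  refine (norm_add_le _ _).trans (add_le_add_right ?_ _)
  simpa using norm_sum_le_of_le (Ico M N) fun n _ => hterm n

lemma norm_thueMorseSum_le_norm_prod_mul_add {z : R} (hz : ‖z‖ ≤ 1) (k N : ℕ) :
    ‖thueMorseSum z N‖
      ≤ ‖∏ i ∈ range k, (1 - z ^ 2 ^ i)‖ * ‖thueMorseSum (z ^ 2 ^ k) (N / 2 ^ k)‖ + 2 ^ k := by
  have hrem : N - 2 ^ k * (N / 2 ^ k) ≤ 2 ^ k := by
    rw [← Nat.mod_eq_sub]
    exact (Nat.mod_lt N (by positivity)).le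
  refine (norm_thueMorseSum_le_add_sub hz (Nat.mul_div_le N (2 ^ k))).trans ?_
  rw [thueMorseSum_two_pow_mul]
  exact add_le_add (norm_mul_le _ _) (by exact_mod_cast hrem)

end SeminormedCommRing

lemma le_mul_rpow_of_le_rpow_mul_div {w : ℕ → ℝ} {q : ℕ} (hq : 1 < q) {α K : ℝ} (hα : 0 ≤ α)
    (hK0 : 0 ≤ K) (hK : ∀ N < q, w N ≤ K) (hw : ∀ N, w N ≤ q ^ α * w (N / q)) {N : ℕ}
    (hN : 0 < N) : w N ≤ K * (N : ℝ) ^ α := by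
  induction N using Nat.strong_induction_on with
  | _ N ih =>
    rcases lt_or_ge N q with hNq | hqN
    · exact (hK N hNq).trans
        (le_mul_of_one_le_right hK0 (Real.one_le_rpow (by exact_mod_cast hN) hα))
    · calc w N ≤ q ^ α * w (N / q) := hw N
        _ ≤ q ^ α * (K * ((N / q : ℕ) : ℝ) ^ α) := by
          gcongr
          exact ih (N / q) (Nat.div_lt_self hN hq) (Nat.div_pos hqN (by omega))
        _ = K * ((q * (N / q) : ℕ) : ℝ) ^ α := by
          rw [Nat.cast_mul, Real.mul_rpow q.cast_nonneg (Nat.cast_nonneg _)]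
          ring
        _ ≤ K * (N : ℝ) ^ α := by
          gcongr
          exact Nat.mul_div_le N q

lemma isBigO_rpow_logb_of_norm_le_mul_norm_div_add {E : Type*} [SeminormedAddCommGroup E]
    {u : ℕ → E} {q : ℕ} (hq : 1 < q) {P C : ℝ} (hP : 1 < P) (hC : 0 ≤ C)
    (hu : ∀ N, ‖u N‖ ≤ P * ‖u (N / q)‖ + C) :
    u =O[atTop] fun N : ℕ => (N : ℝ) ^ Real.logb q P := by
  have hq1 : (1 : ℝ) < q := by exact_mod_cast hq
  have hqP : (q : ℝ) ^ Real.logb q P = P := Real.rpow_logb (by linarith) hq1.ne' (by linarith)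
  -- adding the fixed point `B` of `B ↦ P * B - C` to `‖u‖` makes the recursion homogeneous
  set B := C / (P - 1)
  have hB : 0 ≤ B := div_nonneg hC (by linarith)
  have hBC : (P - 1) * B = C := mul_div_cancel₀ C (by linarith)
  have hnonneg (n : ℕ) : 0 ≤ ‖u n‖ + B := by positivity
  have hrec (N : ℕ) : ‖u N‖ + B ≤ q ^ Real.logb q P * (‖u (N / q)‖ + B) := by
    rw [hqP]
    linarith [hu N]
  set K := ∑ n ∈ range q, (‖u n‖ + B)
  have hK (N : ℕ) (hN : N < q) : ‖u N‖ + B ≤ K :=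
    single_le_sum (f := fun n => ‖u n‖ + B) (fun n _ => hnonneg n) (mem_range.2 hN)
  refine .of_bound K ?_
  filter_upwards [eventually_gt_atTop 0] with N hN
  rw [Real.norm_of_nonneg (by positivity)]
  exact (le_add_of_nonneg_right hB).trans <|
    le_mul_rpow_of_le_rpow_mul_div hq (Real.logb_nonneg hq1 hP.le)
      (sum_nonneg fun n _ => hnonneg n) hK hrec hN

lemma isBigO_thueMorseSum {R : Type*} [SeminormedCommRing R] [NormOneClass R] {z : R} (hz : ‖z‖ ≤ 1)
    {d : ℕ} (hd : d ≠ 0) (hfix : z ^ 2 ^ d = z) {P : ℝ} (hP : 1 < P)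
    (hprod : ‖∏ i ∈ range d, (1 - z ^ 2 ^ i)‖ ≤ P) :
    thueMorseSum z =O[atTop] fun N : ℕ => (N : ℝ) ^ Real.logb (2 ^ d) P := by
  have hrec (N : ℕ) : ‖thueMorseSum z N‖ ≤ P * ‖thueMorseSum z (N / 2 ^ d)‖ + 2 ^ d := by
    have h := norm_thueMorseSum_le_norm_prod_mul_add hz d N
    rw [hfix] at h
    exact h.trans (by gcongr)
  exact_mod_cast isBigO_rpow_logb_of_norm_le_mul_norm_div_add (Nat.one_lt_two_pow hd)
    hP (by positivity) hrec

lemma pow_ne_neg_pow_of_neg_one_notMem_powers {R : Type*} [Ring R] [IsDomain R] {g : R}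
    (hg0 : g ≠ 0) (hg : -1 ∉ Submonoid.powers g) (i k : ℕ) : g ^ i ≠ -g ^ k := by
  intro h
  wlog hki : k ≤ i generalizing i k
  · exact this k i (by rw [h, neg_neg]) (le_of_not_ge hki)
  obtain ⟨l, rfl⟩ := Nat.exists_eq_add_of_le hki
  exact hg ⟨l, mul_left_cancel₀ (pow_ne_zero k hg0) (by simpa [pow_add] using h)⟩

lemma prod_erase_zero_eq_prod_pow_mul_neg {K M : Type*} [Field K] [Fintype K] [DecidableEq K]
    [CommMonoid M] {g : K} (hcard : Fintype.card K = 2 * orderOf g + 1)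
    (hg : -1 ∉ Submonoid.powers g) (f : K → M) :
    ∏ x ∈ univ.erase 0, f x = ∏ i ∈ range (orderOf g), f (g ^ i) * f (-g ^ i) := by
  have hg0 : g ≠ 0 := by
    rintro rfl
    rw [orderOf_zero, mul_zero, zero_add] at hcard
    exact Fintype.one_lt_card.ne' hcard
  have hinj : Set.InjOn (g ^ ·) (range (orderOf g) : Set ℕ) := by
    simpa using pow_injOn_Iio_orderOf (x := g)
  have hinj_neg : Set.InjOn (fun i => -g ^ i) (range (orderOf g) : Set ℕ) :=
    neg_injective.comp_injOn hinj
  have hdisj : Disjoint ((range (orderOf g)).image (g ^ ·))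
      ((range (orderOf g)).image fun i => -g ^ i) := by
    simp only [disjoint_left, mem_image, not_exists, not_and]
    rintro _ ⟨i, -, rfl⟩ k - h
    exact pow_ne_neg_pow_of_neg_one_notMem_powers hg0 hg i k h.symm
  have hunion : (range (orderOf g)).image (g ^ ·) ∪ (range (orderOf g)).image (fun i => -g ^ i)
      = univ.erase 0 := by
    refine eq_of_subset_of_card_le (fun x hx => ?_) ?_
    · simp only [mem_union, mem_image] at hx
      rcases hx with ⟨i, -, rfl⟩ | ⟨i, -, rfl⟩ <;> simp [hg0]
    · rw [card_union_of_disjoint hdisj, card_image_of_injOn hinj, card_image_of_injOn hinj_neg,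
        card_erase_of_mem (mem_univ _), card_univ, card_range]
      omega
  rw [← hunion, prod_union hdisj, prod_image hinj, prod_image hinj_neg, prod_mul_distrib]

lemma addChar_zmod_natCast {m : ℕ} {R : Type*} [CommMonoid R] (χ : AddChar (ZMod m) R) (n : ℕ) :
    χ n = χ 1 ^ n := by
  rw [← AddChar.map_nsmul_eq_pow, nsmul_one]

lemma isPrimitiveRoot_addChar_one {m : ℕ} [NeZero m] {R : Type*} [CommRing R]
    {χ : AddChar (ZMod m) R} (hχ : χ.IsPrimitive) : IsPrimitiveRoot (χ 1) m where
  pow_eq_one := by simp [← addChar_zmod_natCast]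
  dvd_of_pow_eq_one l hl := by
    rwa [← addChar_zmod_natCast, hχ.zmod_char_eq_one_iff, ZMod.natCast_eq_zero_iff] at hl

lemma prod_zmod_erase_zero_eq_prod_Ico {m : ℕ} [NeZero m] {M : Type*} [CommMonoid M]
    (f : ZMod m → M) : ∏ x ∈ univ.erase 0, f x = ∏ k ∈ Ico 1 m, f (k : ℕ) := by
  refine prod_nbij' ZMod.val Nat.cast ?_ ?_ ?_ ?_ ?_
  · intro x hx
    exact mem_Ico.2 ⟨ZMod.val_pos.2 (ne_of_mem_erase hx), x.val_lt⟩
  · intro k hk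
    rw [mem_Ico] at hk
    simpa [ZMod.natCast_eq_zero_iff] using Nat.not_dvd_of_pos_of_lt hk.1 hk.2
  · simp
  · intro k hk
    exact ZMod.val_cast_of_lt (mem_Ico.1 hk).2
  · simp

lemma prod_erase_zero_one_sub_addChar {m : ℕ} [NeZero m] {R : Type*} [CommRing R] [IsDomain R]
    {χ : AddChar (ZMod m) R} (hχ : χ.IsPrimitive) :
    ∏ x ∈ univ.erase 0, (1 - χ x) = m := by
  obtain ⟨n, rfl⟩ := Nat.exists_eq_succ_of_ne_zero (NeZero.ne m)
  simp_rw [prod_zmod_erase_zero_eq_prod_Ico, prod_Ico_eq_prod_range, addChar_zmod_natCast,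
    add_comm 1, Nat.cast_succ]
  exact (isPrimitiveRoot_addChar_one hχ).prod_one_sub_pow_eq_order

lemma norm_prod_one_sub_addChar_pow_sq {p : ℕ} [Fact p.Prime] {g : ZMod p}
    (hcard : p = 2 * orderOf g + 1) (hg : -1 ∉ Submonoid.powers g)
    {χ : AddChar (ZMod p) ℂ} (hχ : χ ≠ 1) :
    ‖∏ i ∈ range (orderOf g), (1 - χ (g ^ i))‖ ^ 2 = p := by
  have hneg (x : ZMod p) : ‖1 - χ (-x)‖ = ‖1 - χ x‖ := by
    rw [AddChar.map_neg_eq_conj, ← RCLike.norm_conj]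
    simp
  calc ‖∏ i ∈ range (orderOf g), (1 - χ (g ^ i))‖ ^ 2
      = ∏ i ∈ range (orderOf g), ‖1 - χ (g ^ i)‖ * ‖1 - χ (-g ^ i)‖ := by
        simp only [hneg, prod_mul_distrib, norm_prod, sq]
    _ = ∏ x ∈ univ.erase 0, ‖1 - χ x‖ := by
        rw [prod_erase_zero_eq_prod_pow_mul_neg (by rwa [ZMod.card]) hg fun x => ‖1 - χ x‖]
    _ = p := by
        rw [← norm_prod, prod_erase_zero_one_sub_addChar (.of_ne_one hχ), Complex.norm_natCast]

lemma norm_prod_one_sub_addChar_pow_le_sqrt {p : ℕ} [Fact p.Prime] {g : ZMod p}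
    (hcard : p = 2 * orderOf g + 1) (hg : -1 ∉ Submonoid.powers g) (χ : AddChar (ZMod p) ℂ) :
    ‖∏ i ∈ range (orderOf g), (1 - χ (g ^ i))‖ ≤ √p := by
  rcases eq_or_ne χ 1 with rfl | hχ
  · have := (Fact.out : p.Prime).two_le
    simp [show orderOf g ≠ 0 by omega]
  · exact Real.le_sqrt_of_sq_le (norm_prod_one_sub_addChar_pow_sq hcard hg hχ).le

lemma logb_two_pow_sqrt (d : ℕ) {x : ℝ} (hx : 0 ≤ x) :
    Real.logb (2 ^ d) (√x) = Real.log x / (2 * d * Real.log 2) := by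
  rw [Real.logb, Real.log_sqrt hx, Real.log_pow, div_div, mul_assoc]

lemma isBigO_thueMorseSum_addChar_one {p : ℕ} [Fact p.Prime]
    (hcard : p = 2 * orderOf (2 : ZMod p) + 1) (hneg : -1 ∉ Submonoid.powers (2 : ZMod p))
    (χ : AddChar (ZMod p) ℂ) :
    thueMorseSum (χ 1) =O[atTop]
      fun N : ℕ => (N : ℝ) ^ (Real.log p / ((p - 1) * Real.log 2)) := by
  have hp : 1 < p := (Fact.out : p.Prime).one_lt
  have hpow (i : ℕ) : χ 1 ^ 2 ^ i = χ (2 ^ i) := by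
    rw [← addChar_zmod_natCast, Nat.cast_pow, Nat.cast_ofNat]
  have hprod := norm_prod_one_sub_addChar_pow_le_sqrt hcard hneg χ
  simp_rw [← hpow] at hprod
  have hexp : Real.logb (2 ^ orderOf (2 : ZMod p)) √p = Real.log p / ((p - 1) * Real.log 2) := by
    rw [logb_two_pow_sqrt _ p.cast_nonneg]
    congr 2
    rw [eq_sub_iff_add_eq]
    exact_mod_cast hcard.symm
  rw [← hexp]
  refine isBigO_thueMorseSum (χ.norm_apply 1).le (by omega) ?_ ?_ hprod
  · rw [hpow, pow_orderOf_eq_one]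
  · exact Real.lt_sqrt_of_sq_lt (by exact_mod_cast hp)

lemma abs_count_modEq_sub_div_le_one {m : ℕ} (hm : 0 < m) (a x : ℕ) :
    |(x.count (· ≡ a [MOD m]) : ℝ) - x / m| ≤ 1 := by
  have hle : ((x / m : ℕ) : ℝ) ≤ x / m := Nat.cast_div_le
  have hlt : (x : ℝ) / m < (x / m : ℕ) + 1 := by
    rw [← Nat.floor_div_eq_div (K := ℝ)]
    exact Nat.lt_floor_add_one _
  rw [Nat.count_modEq_card x hm, abs_le]
  split_ifs <;> push_cast <;> constructor <;> linarith

lemma two_mul_ite_mod_two_eq (k : ℕ) {j : ℕ} (hj : j < 2) :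
    2 * (if k % 2 = j then 1 else 0 : ℝ) = 1 + (-1) ^ j * (-1) ^ k := by
  rw [← pow_add]
  rcases Nat.even_or_odd (j + k) with h | h
  · rw [if_pos (by grind), h.neg_one_pow]
    norm_num
  · rw [if_neg (by grind), h.neg_one_pow]
    norm_num

lemma two_mul_T {m a j : ℕ} (ha : a < m) (hj : j < 2) (x : ℕ) :
    2 * (T m a j x : ℝ) = x.count (· ≡ a [MOD m])
      + (-1) ^ j * ∑ n ∈ range x with n ≡ a [MOD m], (-1) ^ s n := by
  have hfilter : {n ∈ range x | n % m = a} = {n ∈ range x | n ≡ a [MOD m]} := by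
    simp_rw [Nat.ModEq, Nat.mod_eq_of_lt ha]
  rw [T, ← filter_filter, hfilter, card_filter, Nat.count_eq_card_filter_range, card_eq_sum_ones]
  push_cast
  rw [mul_sum, mul_sum, ← sum_add_distrib]
  exact sum_congr rfl fun n _ => two_mul_ite_mod_two_eq (s n) hj

lemma mul_sum_modEq_eq_sum_addChar {m : ℕ} [NeZero m] (a x : ℕ) :
    (m : ℂ) * ∑ n ∈ range x with n ≡ a [MOD m], (-1) ^ s n
      = ∑ χ : AddChar (ZMod m) ℂ, χ (-a) * thueMorseSum (χ 1) x := by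
  have horth (n : ℕ) : ∑ χ : AddChar (ZMod m) ℂ, χ (-a) * χ 1 ^ n
      = if n ≡ a [MOD m] then (m : ℂ) else 0 := by
    simp_rw [← addChar_zmod_natCast, ← AddChar.map_add_eq_mul, AddChar.sum_apply_eq_ite,
      neg_add_eq_zero, eq_comm (a := (a : ZMod m)), ZMod.natCast_eq_natCast_iff, ZMod.card]
  simp_rw [thueMorseSum, mul_sum, mul_left_comm _ ((-1 : ℂ) ^ _)]
  rw [sum_comm, sum_filter]
  simp_rw [← mul_sum, horth, mul_ite, mul_zero, mul_comm]

lemma isBigO_sum_modEq_neg_one_pow_s {m : ℕ} [NeZero m] (a : ℕ) {g : ℕ → ℝ}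
    (hg : ∀ χ : AddChar (ZMod m) ℂ, thueMorseSum (χ 1) =O[atTop] g) :
    (fun x => ∑ n ∈ range x with n ≡ a [MOD m], (-1 : ℝ) ^ s n) =O[atTop] g := by
  have hm : (m : ℂ) ≠ 0 := NeZero.ne _
  rw [← Complex.isBigO_ofReal_left, ← isBigO_const_mul_left_iff hm]
  simp only [Complex.ofReal_sum, Complex.ofReal_pow, Complex.ofReal_neg, Complex.ofReal_one,
    mul_sum_modEq_eq_sum_addChar]
  exact .fun_sum fun χ _ => (hg χ).const_mul_left _

lemma isBigO_T_sub_div {m a j : ℕ} (ha : a < m) (hj : j < 2) {g : ℕ → ℝ}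
    (hone : (fun _ => 1 : ℕ → ℝ) =O[atTop] g)
    (hg : ∀ χ : AddChar (ZMod m) ℂ, thueMorseSum (χ 1) =O[atTop] g) :
    (fun x : ℕ => (T m a j x : ℝ) - x / (2 * m)) =O[atTop] g := by
  have : NeZero m := ⟨by omega⟩
  have hcount : (fun x : ℕ => (x.count (· ≡ a [MOD m]) : ℝ) - x / m) =O[atTop] g :=
    (IsBigO.of_bound 1 (.of_forall fun x => by
      simpa using abs_count_modEq_sub_div_le_one (NeZero.pos m) a x)).trans hone
  have hsplit (x : ℕ) : 1 / 2 * ((x.count (· ≡ a [MOD m]) - x / m)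
        + (-1) ^ j * ∑ n ∈ range x with n ≡ a [MOD m], (-1) ^ s n)
      = (T m a j x : ℝ) - x / (2 * m) := by
    rw [sub_add_eq_add_sub, ← two_mul_T ha hj]
    ring
  have hsum := (isBigO_sum_modEq_neg_one_pow_s a hg).const_mul_left ((-1) ^ j)
  exact ((hcount.add hsum).const_mul_left _).congr_left hsplit

lemma isBigO_natCast_rpow_of_le {α β : ℝ} (h : α ≤ β) :
    (fun x : ℕ => (x : ℝ) ^ α) =O[atTop] fun x : ℕ => (x : ℝ) ^ β := by
  refine .of_norm_eventuallyLE ?_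
  filter_upwards [eventually_ge_atTop 1] with x hx
  rw [Real.norm_of_nonneg (by positivity)]
  exact Real.rpow_le_rpow_of_exponent_le (by exact_mod_cast hx) h

theorem gelfond_exponent_semiprimitive_root_upper_general
    (p : ℕ) (hp : p.Prime) (hodd : Odd p)
    (hord : orderOf (2 : ZMod p) = (p - 1) / 2)
    (hneg : ¬ ∃ x : ℕ, (2 : ZMod p) ^ x = -1)
    (a : ℕ) (ha : a < p) (j : ℕ) (hj : j < 2) :
    (fun x : ℕ => (T p a j x : ℝ) - x / (2 * p))
      =O[Filter.atTop] fun x : ℕ =>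
        (x : ℝ) ^ (Real.log p / ((p - 1) * Real.log 2)) := by
  have : Fact p.Prime := ⟨hp⟩
  have hcard : p = 2 * orderOf (2 : ZMod p) + 1 := by grind
  have hα : 0 ≤ Real.log p / ((p - 1) * Real.log 2) :=
    div_nonneg (Real.log_natCast_nonneg p) <|
      mul_nonneg (sub_nonneg.2 <| by exact_mod_cast hp.one_le) (Real.log_nonneg one_le_two)
  refine isBigO_T_sub_div ha hj ?_ (isBigO_thueMorseSum_addChar_one hcard hneg)
  simpa using isBigO_natCast_rpow_of_le hα

/-- Upper-bound half of Theorem 3: if `p` is an odd prime for which `2` is a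
semiprimitive root (order `(p-1)/2` and `2^x ≡ -1 (mod p)` unsolvable), then
`T_{p,a}^{(j)}(x) = x/(2p) + O(x^{α+ε})` for every `ε > 0`, where
`α = ln p / ((p-1) ln 2)`. -/
theorem gelfond_exponent_semiprimitive_root_upper
    (p : ℕ) (hp : p.Prime) (hodd : Odd p)
    (hord : orderOf (2 : ZMod p) = (p - 1) / 2)
    (hneg : ¬ ∃ x : ℕ, (2 : ZMod p) ^ x = -1)
    (a : ℕ) (ha : a < p) (j : ℕ) (hj : j < 2)
    (ε : ℝ) (hε : 0 < ε) :
    (fun x : ℕ => (T p a j x : ℝ) - x / (2 * p))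
      =O[Filter.atTop] fun x : ℕ =>
        (x : ℝ) ^ (Real.log p / ((p - 1) * Real.log 2) + ε) :=
  (gelfond_exponent_semiprimitive_root_upper_general p hp hodd hord hneg a ha j hj).trans
    (isBigO_natCast_rpow_of_le (by linarith))
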